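/- Let k be a field and n ≥ 1. The Brauer algebra Br(A_n, k[δ,δ⁻¹], δ) over the Laurent polynomial ring k[δ,δ⁻¹], with parameter the variable δ, is a free k[δ,δ⁻¹]-module of rank (2n+1)!! = 1·3·5⋯(2n+1). -/

import Mathlib

open FreeAlgebra

/-- The path graph (Coxeter diagram of type `A_n`) on nodes `1, …, n`
(realized as `Fin n`, node `i` corresponding to index `i-1`): node `i` is
adjacent to node `i+1` for `1 ≤ i ≤ n-1`. -/
def typeA (n : ℕ) : SimpleGraph (Fin n) :=
  SimpleGraph.fromRel (fun i j => (i : ℕ) + 1 = (j : ℕ))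

/-- The Coxeter diagram of type `D_n` (`n ≥ 4`) on nodes `1, …, n` (realized as
`Fin n`, node `i` corresponding to index `i-1`): nodes `1` and `2` are both
adjacent to node `3`, and nodes `i`, `i+1` are adjacent for `3 ≤ i ≤ n-1`. -/
def typeD (n : ℕ) : SimpleGraph (Fin n) :=
  SimpleGraph.fromRel (fun i j =>
    ((i : ℕ) = 0 ∧ (j : ℕ) = 2) ∨ ((i : ℕ) = 1 ∧ (j : ℕ) = 2) ∨
      (2 ≤ (i : ℕ) ∧ (i : ℕ) + 1 = (j : ℕ)))

/-- The Coxeter diagram of type `E_n` (`n = 6, 7, 8`) on nodes `1, …, n`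
(realized as `Fin n`, node `i` corresponding to index `i-1`): a path on nodes
`1, 3, 4, …, n` together with node `2` attached to node `4`. -/
def typeE (n : ℕ) : SimpleGraph (Fin n) :=
  SimpleGraph.fromRel (fun i j =>
    ((i : ℕ) = 0 ∧ (j : ℕ) = 2) ∨ ((i : ℕ) = 1 ∧ (j : ℕ) = 3) ∨
      (2 ≤ (i : ℕ) ∧ (i : ℕ) + 1 = (j : ℕ)))
/-- The defining relations of the Brauer algebra `Br(Q, R, δ)` of simply-laced
type given by the graph `Q`, imposed on the free `R`-algebra on the generators
`R_1, …, R_n` (encoded as `Sum.inl i`) and `E_1, …, E_n` (encoded as `Sum.inr i`). -/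
inductive BrauerRel (n : ℕ) (Q : SimpleGraph (Fin n)) (R : Type*) [CommRing R] (δ : R) :
    FreeAlgebra R (Fin n ⊕ Fin n) → FreeAlgebra R (Fin n ⊕ Fin n) → Prop
  /-- `R_i² = 1` -/
  | rsq (i : Fin n) : BrauerRel n Q R δ (ι R (.inl i) * ι R (.inl i)) 1
  /-- `R_i E_i = E_i` -/
  | re (i : Fin n) : BrauerRel n Q R δ (ι R (.inl i) * ι R (.inr i)) (ι R (.inr i))
  /-- `E_i R_i = E_i` -/
  | er (i : Fin n) : BrauerRel n Q R δ (ι R (.inr i) * ι R (.inl i)) (ι R (.inr i))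
  /-- `E_i² = δ·E_i` -/
  | esq (i : Fin n) : BrauerRel n Q R δ (ι R (.inr i) * ι R (.inr i)) (δ • ι R (.inr i))
  /-- `R_i R_j = R_j R_i` whenever `i ≁ j` -/
  | rr (i j : Fin n) (hne : i ≠ j) (hadj : ¬ Q.Adj i j) :
      BrauerRel n Q R δ (ι R (.inl i) * ι R (.inl j)) (ι R (.inl j) * ι R (.inl i))
  /-- `E_i R_j = R_j E_i` whenever `i ≁ j` -/
  | erc (i j : Fin n) (hne : i ≠ j) (hadj : ¬ Q.Adj i j) :
      BrauerRel n Q R δ (ι R (.inr i) * ι R (.inl j)) (ι R (.inl j) * ι R (.inr i))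
  /-- `E_i E_j = E_j E_i` whenever `i ≁ j` -/
  | ee (i j : Fin n) (hne : i ≠ j) (hadj : ¬ Q.Adj i j) :
      BrauerRel n Q R δ (ι R (.inr i) * ι R (.inr j)) (ι R (.inr j) * ι R (.inr i))
  /-- `R_i R_j R_i = R_j R_i R_j` whenever `i ∼ j` -/
  | braid (i j : Fin n) (hadj : Q.Adj i j) :
      BrauerRel n Q R δ (ι R (.inl i) * ι R (.inl j) * ι R (.inl i))
        (ι R (.inl j) * ι R (.inl i) * ι R (.inl j))
  /-- `R_j R_i E_j = E_i E_j` whenever `i ∼ j` -/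
  | rre (i j : Fin n) (hadj : Q.Adj i j) :
      BrauerRel n Q R δ (ι R (.inl j) * ι R (.inl i) * ι R (.inr j))
        (ι R (.inr i) * ι R (.inr j))
  /-- `R_i E_j R_i = R_j E_i R_j` whenever `i ∼ j` -/
  | rer (i j : Fin n) (hadj : Q.Adj i j) :
      BrauerRel n Q R δ (ι R (.inl i) * ι R (.inr j) * ι R (.inl i))
        (ι R (.inl j) * ι R (.inr i) * ι R (.inl j))

/-- The Brauer algebra `Br(Q, R, δ)` of simply-laced type `Q` over the
commutative ring `R` with parameter `δ ∈ R`. -/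
abbrev BrauerAlgebra (n : ℕ) (Q : SimpleGraph (Fin n)) (R : Type*) [CommRing R] (δ : R) :=
  RingQuot (BrauerRel n Q R δ)

/-! The Brauer algebra of type `A_n` acts, by concatenation at the top row, on the free module on
the perfect matchings of two rows of `n + 1` points, of which there are `(2n+1)‼`. Acting on the
identity diagram reaches every matching: permuting the top row gives all matchings without
horizontal pairs, and a matching with horizontal pairs arises from one with fewer of them by joining
two top points.

Conversely, `(2n+1)‼` elements span the algebra. By induction on `m`, the subalgebra generated by
the first `m + 1` pairs `R_i, E_i` is spanned by `2m + 3` translates of the one generated by the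
first `m` pairs, namely `R_j ⋯ R_m b` and `b E_m R_{m-1} ⋯ R_j`. To see that this span is stable
under left multiplication one needs, for `m - 1`, the same normal form and its mirror image, which
is the normal form in the opposite algebra.

By Orzech's theorem a surjection from a module with `N` generators onto a free module of rank `N` is
an isomorphism. -/

/-- Orzech: precomposing `f` with a surjection from `I →₀ R` onto `M` gives a surjective, hence
injective, endomorphism of a finitely generated module. -/
theorem bijective_of_surjective_finsupp_of_card_le {R M I : Type*} [Semiring R]
    [OrzechProperty R] [AddCommMonoid M] [Module R M] [Finite I] {s : Finset M}
    (hs : Submodule.span R (s : Set M) = ⊤) (hcard : s.card ≤ Nat.card I) (f : M →ₗ[R] I →₀ R)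
    (hf : Function.Surjective f) : Function.Bijective f := by
  have := Fintype.ofFinite I
  obtain ⟨emb⟩ : Nonempty (s ↪ I) := Function.Embedding.nonempty_of_card_le <| by
    rwa [Fintype.card_coe, ← Nat.card_eq_fintype_card]
  let g := Finsupp.linearCombination R (Function.extend emb ((↑) : s → M) 0)
  have hg : Function.Surjective g := by
    rw [← LinearMap.range_eq_top, Finsupp.range_linearCombination, eq_top_iff, ← hs]
    exact Submodule.span_mono fun x hx ↦ ⟨emb ⟨x, hx⟩, emb.injective.extend_apply _ _ ⟨x, hx⟩⟩
  have hinj : Function.Injective (f ∘ₗ g) :=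
    OrzechProperty.injective_of_surjective_endomorphism _ (hf.comp hg)
  exact ⟨Function.Injective.of_comp_right (f := f) hinj hg, hf⟩

/-- A family `r i, e i` of elements of an `R`-algebra, indexed by the vertices of a graph `Q`,
satisfying the defining relations of the Brauer algebra of type `Q` with parameter `δ`. Such
families in `A` are the same thing as algebra homomorphisms from the Brauer algebra to `A`, and
passing to the opposite algebra preserves them. -/
structure IsBrauerSystem {V R A : Type*} [CommRing R] [Ring A] [Algebra R A]
    (Q : SimpleGraph V) (δ : R) (r e : V → A) : Prop where
  r_mul_r (i : V) : r i * r i = 1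
  r_mul_e (i : V) : r i * e i = e i
  e_mul_r (i : V) : e i * r i = e i
  e_mul_e (i : V) : e i * e i = δ • e i
  commute_r_r {i j : V} : i ≠ j → ¬ Q.Adj i j → Commute (r i) (r j)
  commute_e_r {i j : V} : i ≠ j → ¬ Q.Adj i j → Commute (e i) (r j)
  commute_e_e {i j : V} : i ≠ j → ¬ Q.Adj i j → Commute (e i) (e j)
  braid {i j : V} : Q.Adj i j → r i * r j * r i = r j * r i * r j
  r_mul_r_mul_e {i j : V} : Q.Adj i j → r j * r i * e j = e i * e j
  r_mul_e_mul_r {i j : V} : Q.Adj i j → r i * e j * r i = r j * e i * r j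

namespace IsBrauerSystem

variable {V R A : Type*} [CommRing R] [Ring A] [Algebra R A] {Q : SimpleGraph V} {δ : R}
  {r e : V → A} {i j : V}

theorem r_mul_r_mul_cancel (h : IsBrauerSystem Q δ r e) (i : V) (x : A) :
    r i * (r i * x) = x := by
  rw [← mul_assoc, h.r_mul_r, one_mul]

theorem semiconjBy_r_mul_r_r (h : IsBrauerSystem Q δ r e) (hij : Q.Adj i j) :
    SemiconjBy (r j * r i) (r j) (r i) := by
  rw [SemiconjBy, ← mul_assoc, h.braid hij]

theorem semiconjBy_r_mul_r_e (h : IsBrauerSystem Q δ r e) (hij : Q.Adj i j) :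
    SemiconjBy (r j * r i) (e j) (e i) := by
  have key : r j * (r i * e j * r i) * r i = r j * (r j * e i * r j) * r i := by
    rw [h.r_mul_e_mul_r hij]
  simpa only [SemiconjBy, mul_assoc, h.r_mul_r_mul_cancel, h.r_mul_r, mul_one] using key

theorem e_mul_r_mul_r (h : IsBrauerSystem Q δ r e) (hij : Q.Adj i j) :
    e i * r j * r i = e i * e j := by
  rw [mul_assoc, ← (h.semiconjBy_r_mul_r_e hij).eq, h.r_mul_r_mul_e hij]

theorem e_mul_e_mul_e (h : IsBrauerSystem Q δ r e) (hij : Q.Adj i j) :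
    e j * e i * e j = e j := by
  rw [← h.r_mul_r_mul_e hij.symm, mul_assoc, ← h.r_mul_r_mul_e hij]
  simp only [mul_assoc, h.r_mul_r_mul_cancel]

theorem e_mul_r_mul_e (h : IsBrauerSystem Q δ r e) (hij : Q.Adj i j) :
    e j * r i * e j = e j := by
  calc e j * r i * e j = e j * r i * r j * e j := by rw [mul_assoc _ (r j), h.r_mul_e]
    _ = e j := by rw [h.e_mul_r_mul_r hij.symm, h.e_mul_e_mul_e hij]

theorem r_mul_e_mul_e (h : IsBrauerSystem Q δ r e) (hij : Q.Adj i j) :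
    r j * e i * e j = r i * e j := by
  rw [mul_assoc, ← h.r_mul_r_mul_e hij, mul_assoc, h.r_mul_r_mul_cancel]

open MulOpposite in
protected theorem op (h : IsBrauerSystem Q δ r e) :
    IsBrauerSystem Q δ (fun i ↦ op (r i)) (fun i ↦ op (e i)) where
  r_mul_r i := by rw [← op_mul, h.r_mul_r, op_one]
  r_mul_e i := by rw [← op_mul, h.e_mul_r]
  e_mul_r i := by rw [← op_mul, h.r_mul_e]
  e_mul_e i := by rw [← op_mul, h.e_mul_e, op_smul]
  commute_r_r hne hij := (h.commute_r_r hne hij).op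
  commute_e_r hne hij := (h.commute_e_r hne hij).op
  commute_e_e hne hij := (h.commute_e_e hne hij).op
  braid hij := by simp only [← op_mul, ← mul_assoc, h.braid hij]
  r_mul_r_mul_e hij := by simp only [← op_mul, ← mul_assoc, h.e_mul_r_mul_r hij.symm]
  r_mul_e_mul_r hij := by simp only [← op_mul, ← mul_assoc, h.r_mul_e_mul_r hij]

end IsBrauerSystem

namespace BrauerAlgebra

section UniversalProperty

variable {n : ℕ} (Q : SimpleGraph (Fin n)) {R : Type*} [CommRing R] (δ : R)

/-- The generators `R_i` (`x = .inl i`) and `E_i` (`x = .inr i`) of the Brauer algebra. -/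
noncomputable def gen (x : Fin n ⊕ Fin n) : BrauerAlgebra n Q R δ :=
  RingQuot.mkAlgHom R (BrauerRel n Q R δ) (ι R x)

theorem isBrauerSystem_gen :
    IsBrauerSystem Q δ (fun i ↦ gen Q δ (.inl i)) (fun i ↦ gen Q δ (.inr i)) where
  r_mul_r i := by simpa [gen] using RingQuot.mkAlgHom_rel R (BrauerRel.rsq (Q := Q) (δ := δ) i)
  r_mul_e i := by simpa [gen] using RingQuot.mkAlgHom_rel R (BrauerRel.re (Q := Q) (δ := δ) i)
  e_mul_r i := by simpa [gen] using RingQuot.mkAlgHom_rel R (BrauerRel.er (Q := Q) (δ := δ) i)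
  e_mul_e i := by simpa [gen] using RingQuot.mkAlgHom_rel R (BrauerRel.esq (Q := Q) (δ := δ) i)
  commute_r_r hne hij := by
    simpa [gen, commute_iff_eq] using
      RingQuot.mkAlgHom_rel R (BrauerRel.rr (δ := δ) _ _ hne hij)
  commute_e_r hne hij := by
    simpa [gen, commute_iff_eq] using
      RingQuot.mkAlgHom_rel R (BrauerRel.erc (δ := δ) _ _ hne hij)
  commute_e_e hne hij := by
    simpa [gen, commute_iff_eq] using
      RingQuot.mkAlgHom_rel R (BrauerRel.ee (δ := δ) _ _ hne hij)
  braid hij := by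
    simpa [gen] using RingQuot.mkAlgHom_rel R (BrauerRel.braid (δ := δ) _ _ hij)
  r_mul_r_mul_e hij := by
    simpa [gen] using RingQuot.mkAlgHom_rel R (BrauerRel.rre (δ := δ) _ _ hij)
  r_mul_e_mul_r hij := by
    simpa [gen] using RingQuot.mkAlgHom_rel R (BrauerRel.rer (δ := δ) _ _ hij)

theorem adjoin_range_gen : Algebra.adjoin R (Set.range (gen Q δ)) = ⊤ := by
  have hrange : Set.range (gen Q δ) =
      RingQuot.mkAlgHom R (BrauerRel n Q R δ) '' Set.range (ι R) := Set.range_comp _ _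
  rw [hrange, ← AlgHom.map_adjoin, FreeAlgebra.adjoin_range_ι, Algebra.map_top,
    AlgHom.range_eq_top]
  exact RingQuot.mkAlgHom_surjective R _

variable {Q δ} {A : Type*} [Ring A] [Algebra R A] {r e : Fin n → A}

/-- The algebra homomorphism out of the Brauer algebra determined by a Brauer system. -/
noncomputable def lift (h : IsBrauerSystem Q δ r e) : BrauerAlgebra n Q R δ →ₐ[R] A :=
  RingQuot.liftAlgHom R ⟨FreeAlgebra.lift R (Sum.elim r e), fun x y hxy ↦ by
    cases hxy with
    | rsq i => simpa using h.r_mul_r i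
    | re i => simpa using h.r_mul_e i
    | er i => simpa using h.e_mul_r i
    | esq i => simpa using h.e_mul_e i
    | rr i j hne hij => simpa using (h.commute_r_r hne hij).eq
    | erc i j hne hij => simpa using (h.commute_e_r hne hij).eq
    | ee i j hne hij => simpa using (h.commute_e_e hne hij).eq
    | braid i j hij => simpa using h.braid hij
    | rre i j hij => simpa using h.r_mul_r_mul_e hij
    | rer i j hij => simpa using h.r_mul_e_mul_r hij⟩

@[simp]
theorem lift_gen (h : IsBrauerSystem Q δ r e) (x : Fin n ⊕ Fin n) :
    lift h (gen Q δ x) = Sum.elim r e x := by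
  rw [gen, lift, RingQuot.liftAlgHom_mkAlgHom_apply, FreeAlgebra.lift_ι_apply]

end UniversalProperty

theorem typeA_adj {n : ℕ} {i j : Fin n} :
    (typeA n).Adj i j ↔ (i : ℕ) + 1 = j ∨ (j : ℕ) + 1 = i := by
  rw [typeA, SimpleGraph.fromRel_adj, and_iff_right_iff_imp]
  rintro hij rfl
  omega

section Chain

variable {M : Type*} [Monoid M]

/-- The ascending product `x i * x (i + 1) * ⋯ * x (m - 1)`. -/
def chain (x : ℕ → M) (i m : ℕ) : M := ((List.Ico i m).map x).prod

/-- The descending product `x (m - 1) * ⋯ * x (i + 1) * x i`. -/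
def revChain (x : ℕ → M) (i m : ℕ) : M := ((List.Ico i m).map x).reverse.prod

variable {x : ℕ → M} {i j m : ℕ}

@[simp]
theorem chain_self (x : ℕ → M) (i : ℕ) : chain x i i = 1 := by simp [chain]

@[simp]
theorem revChain_self (x : ℕ → M) (i : ℕ) : revChain x i i = 1 := by simp [revChain]

theorem chain_mul_chain (x : ℕ → M) (hij : i ≤ j) (hjm : j ≤ m) :
    chain x i j * chain x j m = chain x i m := by
  rw [chain, chain, chain, ← List.prod_append, ← List.map_append,
    List.Ico.append_consecutive hij hjm]

theorem chain_succ_right (x : ℕ → M) (h : i ≤ m) : chain x i (m + 1) = chain x i m * x m := by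
  simp [chain, List.Ico.succ_top h]

theorem chain_eq_mul_chain (x : ℕ → M) (h : i < m) : chain x i m = x i * chain x (i + 1) m := by
  simp [chain, List.Ico.eq_cons h]

theorem revChain_succ_right (x : ℕ → M) (h : i ≤ m) :
    revChain x i (m + 1) = x m * revChain x i m := by
  simp [revChain, List.Ico.succ_top h]

theorem chain_mul_revChain (hx : ∀ k, i ≤ k → k < m → x k * x k = 1) (him : i ≤ m) :
    chain x i m * revChain x i m = 1 := by
  induction m, him using Nat.le_induction with
  | base => simp
  | succ m him ih =>
    rw [chain_succ_right x him, revChain_succ_right x him, mul_assoc, ← mul_assoc (x m),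
      hx m him m.lt_succ_self, one_mul, ih fun k hik hkm ↦ hx k hik (by omega)]

theorem unop_chain_op (x : ℕ → M) (i m : ℕ) :
    (chain (fun k ↦ MulOpposite.op (x k)) i m).unop = revChain x i m := by
  simp [chain, revChain, MulOpposite.unop_list_prod, Function.comp_def]

theorem unop_revChain_op (x : ℕ → M) (i m : ℕ) :
    (revChain (fun k ↦ MulOpposite.op (x k)) i m).unop = chain x i m := by
  simp [chain, revChain, MulOpposite.unop_list_prod, Function.comp_def]

theorem commute_chain {y : M} (h : ∀ k, i ≤ k → k < m → Commute y (x k)) :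
    Commute y (chain x i m) := by
  refine Commute.list_prod_right _ _ fun z hz ↦ ?_
  obtain ⟨k, hk, rfl⟩ := List.mem_map.1 hz
  exact h k (List.Ico.mem.1 hk).1 (List.Ico.mem.1 hk).2

theorem chain_mem {S : Type*} [SetLike S M] [SubmonoidClass S M] {s : S}
    (h : ∀ k, i ≤ k → k < m → x k ∈ s) : chain x i m ∈ s := by
  refine list_prod_mem fun z hz ↦ ?_
  obtain ⟨k, hk, rfl⟩ := List.mem_map.1 hz
  exact h k (List.Ico.mem.1 hk).1 (List.Ico.mem.1 hk).2

theorem revChain_mem {S : Type*} [SetLike S M] [SubmonoidClass S M] {s : S}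
    (h : ∀ k, i ≤ k → k < m → x k ∈ s) : revChain x i m ∈ s := by
  refine list_prod_mem fun z hz ↦ ?_
  obtain ⟨k, hk, rfl⟩ := List.mem_map.1 (List.mem_reverse.1 hz)
  exact h k (List.Ico.mem.1 hk).1 (List.Ico.mem.1 hk).2

theorem semiconjBy_chain {y z : M} (hji : j ≤ i) (him : i + 1 < m)
    (hlow : ∀ k, j ≤ k → k < i → Commute z (x k)) (hmid : SemiconjBy (x i * x (i + 1)) y z)
    (hhigh : ∀ k, i + 2 ≤ k → k < m → Commute y (x k)) : SemiconjBy (chain x j m) y z := by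
  have hsplit : chain x j m = chain x j i * (x i * x (i + 1)) * chain x (i + 2) m := by
    rw [← chain_mul_chain x hji (by omega : i ≤ m), chain_eq_mul_chain x (by omega : i < m),
      chain_eq_mul_chain x him]
    simp only [mul_assoc]
  rw [hsplit]
  exact (SemiconjBy.mul_left (commute_chain hlow).symm hmid).mul_left (commute_chain hhigh).symm

end Chain

section Stabilizer

variable {R A : Type*} [CommRing R] [Ring A] [Algebra R A]

theorem mul_mem_of_mem_span {s : Set A} {N : Submodule R A} {a x : A} (h : ∀ y ∈ s, a * y ∈ N)
    (hx : x ∈ Submodule.span R s) : a * x ∈ N :=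
  (Submodule.span_le (p := N.comap (LinearMap.mulLeft R a))).2 h hx

/-- The subalgebra of elements whose left multiplication preserves the submodule `N`. -/
def leftStabilizer (N : Submodule R A) : Subalgebra R A where
  carrier := {a | ∀ x ∈ N, a * x ∈ N}
  mul_mem' ha hb x hx := by rw [mul_assoc]; exact ha _ (hb x hx)
  add_mem' ha hb x hx := by rw [add_mul]; exact add_mem (ha x hx) (hb x hx)
  algebraMap_mem' c x hx := by rw [← Algebra.smul_def]; exact N.smul_mem c hx

end Stabilizer

section Tower

variable {R A : Type*} [CommRing R] [Ring A] [Algebra R A]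

variable (R) in
/-- The subalgebra generated by the `r i` and `e i` with `i < m`, the image of the Brauer algebra
of type `A_m` on the first `m + 1` strands. -/
def tower (r e : ℕ → A) (m : ℕ) : Subalgebra R A :=
  Algebra.adjoin R (r '' Set.Iio m ∪ e '' Set.Iio m)

variable {r e : ℕ → A} {i j k m : ℕ}

theorem r_mem_tower (h : i < m) : r i ∈ tower R r e m :=
  Algebra.subset_adjoin (.inl ⟨i, h, rfl⟩)

theorem e_mem_tower (h : i < m) : e i ∈ tower R r e m :=
  Algebra.subset_adjoin (.inr ⟨i, h, rfl⟩)

theorem tower_le {S : Subalgebra R A} (hr : ∀ i < m, r i ∈ S) (he : ∀ i < m, e i ∈ S) :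
    tower R r e m ≤ S :=
  Algebra.adjoin_le (Set.union_subset (Set.image_subset_iff.2 hr) (Set.image_subset_iff.2 he))

theorem tower_mono (h : k ≤ m) : tower R r e k ≤ tower R r e m :=
  tower_le (fun _ hi ↦ r_mem_tower (hi.trans_le h)) fun _ hi ↦ e_mem_tower (hi.trans_le h)

theorem tower_zero (r e : ℕ → A) : tower R r e 0 = ⊥ := by simp [tower]

theorem chain_r_mem_tower (h : k ≤ m) : chain r i k ∈ tower R r e m :=
  chain_mem fun _ _ hl ↦ r_mem_tower (hl.trans_le h)

theorem chain_e_mem_tower (h : k ≤ m) : chain e i k ∈ tower R r e m :=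
  chain_mem fun _ _ hl ↦ e_mem_tower (hl.trans_le h)

theorem revChain_r_mem_tower (h : k ≤ m) : revChain r i k ∈ tower R r e m :=
  revChain_mem fun _ _ hl ↦ r_mem_tower (hl.trans_le h)

theorem commute_of_mem_tower {y x : A} (hr : ∀ i < m, Commute y (r i))
    (he : ∀ i < m, Commute y (e i)) (hx : x ∈ tower R r e m) : Commute y x := by
  have hle : tower R r e m ≤ Subalgebra.centralizer R {y} :=
    tower_le (fun i hi ↦ Set.mem_centralizer_iff.2 (by simpa using (hr i hi).eq))
      fun i hi ↦ Set.mem_centralizer_iff.2 (by simpa using (he i hi).eq)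
  exact Set.mem_centralizer_iff.1 (hle hx) y rfl

open MulOpposite in
theorem op_mem_tower_op {x : A} (hx : x ∈ tower R r e m) :
    op x ∈ tower R (fun i ↦ op (r i)) (fun i ↦ op (e i)) m := by
  have hle : tower R r e m ≤ (tower R (fun i ↦ op (r i)) (fun i ↦ op (e i)) m).unop :=
    tower_le (fun _ hi ↦ r_mem_tower hi) fun _ hi ↦ e_mem_tower hi
  exact hle hx

open MulOpposite in
theorem unop_mem_tower {x : Aᵐᵒᵖ} (hx : x ∈ tower R (fun i ↦ op (r i)) (fun i ↦ op (e i)) m) :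
    x.unop ∈ tower R r e m := by
  have hle : tower R (fun i ↦ op (r i)) (fun i ↦ op (e i)) m ≤ (tower R r e m).op :=
    tower_le (fun _ hi ↦ r_mem_tower hi) fun _ hi ↦ e_mem_tower hi
  exact hle hx

end Tower

section PathRelations

variable {n : ℕ} {R A : Type*} [CommRing R] [Ring A] [Algebra R A] {δ : R} {r e : ℕ → A}
  {i j m : ℕ}

theorem typeA_adj_succ (h : i + 1 < n) : (typeA n).Adj ⟨i, i.lt_succ_self.trans h⟩ ⟨i + 1, h⟩ :=
  typeA_adj.2 (.inl rfl)

/-- A Brauer system of type `A_n` written as two sequences, of which only the first `n` terms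
matter; this keeps index arithmetic in `ℕ`. -/
abbrev IsPathSystem (n : ℕ) (δ : R) (r e : ℕ → A) : Prop :=
  IsBrauerSystem (typeA n) δ (fun i : Fin n ↦ r i) fun i ↦ e i

theorem not_typeA_adj {i j : Fin n} (h : (i : ℕ) + 1 < j) : i ≠ j ∧ ¬ (typeA n).Adj i j := by
  rw [typeA_adj, Ne, Fin.ext_iff]
  omega

namespace IsPathSystem

theorem commute_r_r (h : IsPathSystem n δ r e) (hij : i + 1 < j) (hj : j < n) :
    Commute (r i) (r j) :=
  have hfar := not_typeA_adj (i := ⟨i, by omega⟩) (j := ⟨j, hj⟩) hij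
  IsBrauerSystem.commute_r_r h hfar.1 hfar.2

theorem commute_e_r (h : IsPathSystem n δ r e) (hij : i + 1 < j) (hj : j < n) :
    Commute (e i) (r j) :=
  have hfar := not_typeA_adj (i := ⟨i, by omega⟩) (j := ⟨j, hj⟩) hij
  IsBrauerSystem.commute_e_r h hfar.1 hfar.2

theorem commute_r_e (h : IsPathSystem n δ r e) (hij : i + 1 < j) (hj : j < n) :
    Commute (r i) (e j) :=
  have hfar := not_typeA_adj (i := ⟨i, by omega⟩) (j := ⟨j, hj⟩) hij
  (IsBrauerSystem.commute_e_r h hfar.1.symm fun hadj ↦ hfar.2 hadj.symm).symm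

theorem commute_e_e (h : IsPathSystem n δ r e) (hij : i + 1 < j) (hj : j < n) :
    Commute (e i) (e j) :=
  have hfar := not_typeA_adj (i := ⟨i, by omega⟩) (j := ⟨j, hj⟩) hij
  IsBrauerSystem.commute_e_e h hfar.1 hfar.2

theorem commute_r_of_mem_tower (h : IsPathSystem n δ r e) (hm : m + 1 < n) {x : A}
    (hx : x ∈ tower R r e m) : Commute (r (m + 1)) x :=
  commute_of_mem_tower (fun _ hi ↦ (h.commute_r_r (Nat.succ_lt_succ hi) hm).symm)
    (fun _ hi ↦ (h.commute_e_r (Nat.succ_lt_succ hi) hm).symm) hx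

theorem commute_e_of_mem_tower (h : IsPathSystem n δ r e) (hm : m + 1 < n) {x : A}
    (hx : x ∈ tower R r e m) : Commute (e (m + 1)) x :=
  commute_of_mem_tower (fun _ hi ↦ (h.commute_r_e (Nat.succ_lt_succ hi) hm).symm)
    (fun _ hi ↦ (h.commute_e_e (Nat.succ_lt_succ hi) hm).symm) hx

theorem semiconjBy_chain_r (h : IsPathSystem n δ r e) (hji : j ≤ i) (him : i + 1 < m)
    (hm : m ≤ n) : SemiconjBy (chain r j m) (r i) (r (i + 1)) :=
  semiconjBy_chain hji him
    (fun _ _ hki ↦ (h.commute_r_r (Nat.succ_lt_succ hki) (by omega)).symm)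
    (h.semiconjBy_r_mul_r_r (typeA_adj_succ (him.trans_le hm)).symm)
    fun _ hik hkm ↦ h.commute_r_r hik (by omega)

theorem semiconjBy_chain_e (h : IsPathSystem n δ r e) (hji : j ≤ i) (him : i + 1 < m)
    (hm : m ≤ n) : SemiconjBy (chain r j m) (e i) (e (i + 1)) :=
  semiconjBy_chain hji him
    (fun _ _ hki ↦ (h.commute_r_e (Nat.succ_lt_succ hki) (by omega)).symm)
    (h.semiconjBy_r_mul_r_e (typeA_adj_succ (him.trans_le hm)).symm)
    fun _ hik hkm ↦ h.commute_e_r hik (by omega)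

theorem chain_mul_chain_succ (h : IsPathSystem n δ r e) (him : i ≤ m) (hm : m + 1 < n) :
    chain r (i + 1) (m + 2) * chain r i (m + 1) =
      chain r (i + 1) (m + 1) * chain r i m * (r (m + 1) * r m) := by
  have hcomm : Commute (r (m + 1)) (chain r i m) :=
    h.commute_r_of_mem_tower hm (chain_r_mem_tower le_rfl)
  rw [chain_succ_right r (by omega : i + 1 ≤ m + 1), chain_succ_right r him]
  simp only [mul_assoc, ← hcomm.left_comm]

theorem semiconjBy_chain_mul_chain_e (h : IsPathSystem n δ r e) (him : i ≤ m) (hm : m < n) :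
    SemiconjBy (chain r (i + 1) (m + 1) * chain r i m) (e m) (e i) := by
  induction m, him using Nat.le_induction with
  | base => simp
  | succ m him ih =>
    rw [h.chain_mul_chain_succ him hm]
    exact (ih (by omega)).mul_left (h.semiconjBy_r_mul_r_e (typeA_adj_succ hm))

theorem chain_mul_chain_mul_e (h : IsPathSystem n δ r e) (him : i ≤ m) (hm : m < n) :
    chain r (i + 1) (m + 1) * chain r i m * e m = chain e i m * e m := by
  induction m, him using Nat.le_induction with
  | base => simp
  | succ m him ih =>
    have hrre : r (m + 1) * r m * e (m + 1) = e m * e (m + 1) :=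
      h.r_mul_r_mul_e (typeA_adj_succ hm)
    rw [h.chain_mul_chain_succ him hm, mul_assoc, hrre, ← mul_assoc, ih (by omega),
      chain_succ_right e him]

end IsPathSystem

end PathRelations

section Decomposition

variable {n : ℕ} {R A : Type*} [CommRing R] [Ring A] [Algebra R A] {δ : R} {r e : ℕ → A}
  {i j m : ℕ} {b x : A}

variable (R r e m) in
/-- The span of the normal forms in `tower R r e (m + 1)` with the factor from `tower R r e m`
on the inside of a chain: in terms of diagrams, the last bottom point is joined either to a top
point (first family) or to another bottom point (second family). -/
def normalSpan : Submodule R A :=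
  Submodule.span R
    (Set.image2 (fun j b ↦ chain r j (m + 1) * b) (Set.Iic (m + 1)) (tower R r e m) ∪
      Set.image2 (fun b j ↦ b * (e m * revChain r j m)) (tower R r e m) (Set.Iic m))

theorem chain_mul_mem_normalSpan (hj : j ≤ m + 1) (hb : b ∈ tower R r e m) :
    chain r j (m + 1) * b ∈ normalSpan R r e m :=
  Submodule.subset_span (.inl ⟨j, hj, b, hb, rfl⟩)

theorem mul_revChain_mem_normalSpan (hj : j ≤ m) (hb : b ∈ tower R r e m) :
    b * (e m * revChain r j m) ∈ normalSpan R r e m :=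
  Submodule.subset_span (.inr ⟨b, hb, j, hj, rfl⟩)

theorem mem_normalSpan_of_mem_tower (hb : b ∈ tower R r e m) : b ∈ normalSpan R r e m := by
  simpa using chain_mul_mem_normalSpan le_rfl hb

variable (R r e m) in
/-- The mirror image of `normalSpan` under reversal of products. -/
def mirrorSpan : Submodule R A :=
  Submodule.span R
    (Set.image2 (fun b j ↦ b * revChain r j (m + 1)) (tower R r e m) (Set.Iic (m + 1)) ∪
      Set.image2 (fun j b ↦ chain r j m * e m * b) (Set.Iic m) (tower R r e m))

open MulOpposite in
theorem mem_mirrorSpan_of_op_mem_normalSpan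
    (hx : op x ∈ normalSpan R (fun i ↦ op (r i)) (fun i ↦ op (e i)) m) :
    x ∈ mirrorSpan R r e m := by
  suffices hle : normalSpan R (fun i ↦ op (r i)) (fun i ↦ op (e i)) m ≤
      (mirrorSpan R r e m).comap (opLinearEquiv R).symm.toLinearMap from hle hx
  refine Submodule.span_le.2 ?_
  rintro _ (⟨j, hj, b, hb, rfl⟩ | ⟨b, hb, j, hj, rfl⟩) <;> refine Submodule.subset_span ?_
  · exact .inl ⟨b.unop, unop_mem_tower hb, j, hj, by simp [unop_chain_op]⟩
  · exact .inr ⟨j, hj, b.unop, unop_mem_tower hb, by simp [unop_revChain_op]⟩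

theorem mirrorSpan_le_span_mul_mul :
    mirrorSpan R r e m ≤ Submodule.span R
      {x | ∃ b ∈ tower R r e m, ∃ y ∈ ({1, r m, e m} : Set A), ∃ c ∈ tower R r e m,
        x = b * y * c} := by
  refine Submodule.span_mono ?_
  rintro _ (⟨b, hb, j, hj, rfl⟩ | ⟨j, -, b, hb, rfl⟩)
  · obtain rfl | hj := eq_or_lt_of_le (Set.mem_Iic.1 hj)
    · exact ⟨b, hb, 1, by simp, 1, one_mem _, by simp⟩
    · refine ⟨b, hb, r m, by simp, revChain r j m, revChain_r_mem_tower le_rfl, ?_⟩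
      simp only [revChain_succ_right r (Nat.lt_succ_iff.1 hj), mul_assoc]
  · exact ⟨chain r j m, chain_r_mem_tower le_rfl, e m, by simp, b, hb, rfl⟩

namespace IsPathSystem

theorem exists_mul_mul_e_eq (h : IsPathSystem n δ r e) (hm : m + 1 < n) {x y : A}
    (hx : x = r (m + 1) ∨ x = e (m + 1)) (hy : y ∈ ({1, r m, e m} : Set A)) :
    ∃ z ∈ tower R r e (m + 1), x * y * e (m + 1) = z * e (m + 1) := by
  have hadj := typeA_adj_succ hm
  have hr : r m ∈ tower R r e (m + 1) := r_mem_tower m.lt_succ_self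
  have he : e m ∈ tower R r e (m + 1) := e_mem_tower m.lt_succ_self
  obtain rfl | rfl := hx <;> obtain rfl | rfl | rfl := hy
  · exact ⟨1, one_mem _, by simpa using h.r_mul_e ⟨m + 1, hm⟩⟩
  · exact ⟨e m, he, h.r_mul_r_mul_e hadj⟩
  · exact ⟨r m, hr, h.r_mul_e_mul_e hadj⟩
  · exact ⟨δ • 1, Subalgebra.smul_mem _ (one_mem _) δ, by simpa using h.e_mul_e ⟨m + 1, hm⟩⟩
  · exact ⟨1, one_mem _, by simpa using h.e_mul_r_mul_e hadj⟩
  · exact ⟨1, one_mem _, by simpa using h.e_mul_e_mul_e hadj⟩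

theorem exists_mul_e_eq_of_mem_mirrorSpan (h : IsPathSystem n δ r e) (hm : m + 1 < n)
    (hx : x = r (m + 1) ∨ x = e (m + 1)) (hb : b ∈ mirrorSpan R r e m) :
    ∃ z ∈ tower R r e (m + 1), x * b * e (m + 1) = z * e (m + 1) := by
  let N : Submodule R A :=
    (Subalgebra.toSubmodule (tower R r e (m + 1))).map (LinearMap.mulRight R (e (m + 1)))
  suffices hle : mirrorSpan R r e m ≤
      N.comap (LinearMap.mulRight R (e (m + 1)) ∘ₗ LinearMap.mulLeft R x) by
    obtain ⟨z, hz, hzb⟩ := hle hb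
    exact ⟨z, hz, hzb.symm⟩
  refine mirrorSpan_le_span_mul_mul.trans (Submodule.span_le.2 ?_)
  rintro _ ⟨b, hb, y, hy, c, hc, rfl⟩
  obtain ⟨z, hz, hxyz⟩ := h.exists_mul_mul_e_eq hm hx hy
  have hxb : Commute x b := by
    obtain rfl | rfl := hx
    exacts [h.commute_r_of_mem_tower hm hb, h.commute_e_of_mem_tower hm hb]
  have hec : Commute (e (m + 1)) c := h.commute_e_of_mem_tower hm hc
  have hmono : tower R r e m ≤ tower R r e (m + 1) := tower_mono m.le_succ
  have hbzc : b * z * c ∈ tower R r e (m + 1) := mul_mem (mul_mem (hmono hb) hz) (hmono hc)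
  refine ⟨b * z * c, hbzc, ?_⟩
  calc b * z * c * e (m + 1) = b * (z * e (m + 1)) * c := by simp only [mul_assoc, hec.eq]
    _ = b * (x * y * e (m + 1)) * c := by rw [hxyz]
    _ = b * x * y * (e (m + 1) * c) := by simp only [mul_assoc]
    _ = x * (b * y * c) * e (m + 1) := by rw [← hxb.eq, hec.eq]; simp only [mul_assoc]

theorem exists_mul_e_eq (h : IsPathSystem n δ r e) (hm : m < n)
    (hmirror : ∀ k, k + 1 = m → ∀ c ∈ tower R r e m, c ∈ mirrorSpan R r e k)
    (hx : x = r m ∨ x = e m) (hb : b ∈ tower R r e m) :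
    ∃ z ∈ tower R r e m, x * b * e m = z * e m := by
  cases m with
  | succ m => exact h.exists_mul_e_eq_of_mem_mirrorSpan hm hx (hmirror m rfl b hb)
  | zero =>
    rw [tower_zero, Algebra.mem_bot] at hb
    obtain ⟨a, rfl⟩ := hb
    obtain rfl | rfl := hx
    · refine ⟨_, algebraMap_mem _ a, ?_⟩
      rw [← Algebra.commutes, mul_assoc, h.r_mul_e ⟨0, hm⟩]
    · refine ⟨_, algebraMap_mem _ (a * δ), ?_⟩
      rw [← Algebra.commutes, mul_assoc, h.e_mul_e ⟨0, hm⟩, map_mul, mul_assoc, Algebra.smul_def]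

theorem mul_mem_normalSpan_of_cup (h : IsPathSystem n δ r e) (hm : m < n)
    (hmirror : ∀ k, k + 1 = m → ∀ c ∈ tower R r e m, c ∈ mirrorSpan R r e k)
    (hx : x ∈ r '' Set.Iic m ∪ e '' Set.Iic m) (hb : b ∈ tower R r e m) (hj : j ≤ m) :
    x * (b * (e m * revChain r j m)) ∈ normalSpan R r e m := by
  suffices hz : ∃ z ∈ tower R r e m, x * b * e m = z * e m by
    obtain ⟨z, hz, hxz⟩ := hz
    rw [← mul_assoc, ← mul_assoc, hxz, mul_assoc]
    exact mul_revChain_mem_normalSpan hj hz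
  obtain ⟨i, hi, rfl⟩ | ⟨i, hi, rfl⟩ := hx <;> obtain rfl | hi := eq_or_lt_of_le (Set.mem_Iic.1 hi)
  · exact h.exists_mul_e_eq hm hmirror (.inl rfl) hb
  · exact ⟨r i * b, mul_mem (r_mem_tower hi) hb, rfl⟩
  · exact h.exists_mul_e_eq hm hmirror (.inr rfl) hb
  · exact ⟨e i * b, mul_mem (e_mem_tower hi) hb, rfl⟩

theorem r_mem_leftStabilizer (h : IsPathSystem n δ r e) (hm : m < n)
    (hmirror : ∀ k, k + 1 = m → ∀ c ∈ tower R r e m, c ∈ mirrorSpan R r e k) (hi : i ≤ m) :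
    r i ∈ leftStabilizer (normalSpan R r e m) := by
  refine fun x hx ↦ mul_mem_of_mem_span ?_ hx
  rintro _ (⟨j, hj, b, hb, rfl⟩ | ⟨b, hb, j, hj, rfl⟩)
  · rw [Set.mem_Iic] at hj
    beta_reduce
    rw [← mul_assoc]
    obtain hij | rfl | rfl | hji : i + 1 < j ∨ j = i + 1 ∨ j = i ∨ j < i := by omega
    · rw [(commute_chain fun k hjk hkm ↦ h.commute_r_r (by omega) (by omega)).eq, mul_assoc]
      exact chain_mul_mem_normalSpan hj (mul_mem (r_mem_tower (by omega)) hb)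
    · rw [← chain_eq_mul_chain r (by omega)]
      exact chain_mul_mem_normalSpan (by omega) hb
    · rw [chain_eq_mul_chain r (by omega), h.r_mul_r_mul_cancel ⟨j, by omega⟩]
      exact chain_mul_mem_normalSpan (by omega) hb
    · obtain ⟨i, rfl⟩ := Nat.exists_eq_add_one_of_ne_zero (Nat.ne_zero_of_lt hji)
      rw [← (h.semiconjBy_chain_r (by omega) (by omega) (by omega)).eq, mul_assoc]
      exact chain_mul_mem_normalSpan hj (mul_mem (r_mem_tower (by omega)) hb)
  · exact h.mul_mem_normalSpan_of_cup hm hmirror (.inl ⟨i, hi, rfl⟩) hb hj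

theorem chain_mul_chain_mem_leftStabilizer (h : IsPathSystem n δ r e) (hm : m < n)
    (hmirror : ∀ k, k + 1 = m → ∀ c ∈ tower R r e m, c ∈ mirrorSpan R r e k) :
    chain r (i + 1) (m + 1) * chain r i m ∈ leftStabilizer (normalSpan R r e m) :=
  mul_mem (chain_mem fun _ _ hk ↦ h.r_mem_leftStabilizer hm hmirror (by omega))
    (chain_mem fun _ _ hk ↦ h.r_mem_leftStabilizer hm hmirror (by omega))

theorem e_mul_chain_mul_e (h : IsPathSystem n δ r e) (hm : m + 1 < n) (hj : j ≤ m) :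
    e (m + 1) * (chain r j m * e m) = chain r j (m + 2) * e m := by
  have hrre : r m * r (m + 1) * e m = e (m + 1) * e m :=
    h.r_mul_r_mul_e (typeA_adj_succ hm).symm
  have hcomm : Commute (e (m + 1)) (chain r j m) :=
    h.commute_e_of_mem_tower hm (chain_r_mem_tower le_rfl)
  rw [hcomm.left_comm, ← hrre, chain_succ_right r (by omega), chain_succ_right r hj]
  simp only [mul_assoc]

theorem chain_e_mul_mem_normalSpan_of_mem_tower (h : IsPathSystem n δ r e) (hm : m < n)
    (hmirror : ∀ k, k + 1 = m → ∀ c ∈ tower R r e m, c ∈ mirrorSpan R r e k) (hi : i ≤ m)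
    (hb : b ∈ tower R r e m) :
    chain r (i + 1) (m + 1) * chain r i m * (e m * b) ∈ normalSpan R r e m := by
  cases m with
  | zero =>
    obtain rfl : i = 0 := by omega
    rw [tower_zero, Algebra.mem_bot] at hb
    obtain ⟨a, rfl⟩ := hb
    simpa [← Algebra.commutes] using
      mul_revChain_mem_normalSpan (r := r) (e := e) le_rfl (algebraMap_mem (tower R r e 0) a)
  | succ m =>
    have hmono : tower R r e m ≤ tower R r e (m + 1) := tower_mono m.le_succ
    rw [← mul_assoc]
    refine mul_mem_of_mem_span ?_ (hmirror m rfl b hb)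
    rintro _ (⟨c, hc, j, hj, rfl⟩ | ⟨j, hj, c, hc, rfl⟩)
    · beta_reduce
      rw [h.chain_mul_chain_mul_e hi hm, mul_assoc,
        (h.commute_e_of_mem_tower hm hc).left_comm, ← mul_assoc]
      exact mul_revChain_mem_normalSpan hj (mul_mem (chain_e_mem_tower le_rfl) (hmono hc))
    · beta_reduce
      rw [mul_assoc (_ * _) (e (m + 1)), ← mul_assoc (e (m + 1)), h.e_mul_chain_mul_e hm hj,
        mul_assoc (chain r j _)]
      refine h.chain_mul_chain_mem_leftStabilizer hm hmirror _ ?_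
      exact chain_mul_mem_normalSpan (Nat.le_succ_of_le (Nat.le_succ_of_le hj))
        (mul_mem (e_mem_tower m.lt_succ_self) (hmono hc))

theorem e_mul_chain_mul_mem_normalSpan (h : IsPathSystem n δ r e) (hm : m < n)
    (hmirror : ∀ k, k + 1 = m → ∀ c ∈ tower R r e m, c ∈ mirrorSpan R r e k) (hi : i ≤ m)
    (hb : b ∈ tower R r e m) : e i * (chain r (i + 1) (m + 1) * b) ∈ normalSpan R r e m := by
  have hb' : chain r i m * (revChain r i m * b) = b := by
    rw [← mul_assoc, chain_mul_revChain (fun k _ hk ↦ h.r_mul_r ⟨k, by omega⟩) hi, one_mul]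
  have hsemi := h.semiconjBy_chain_mul_chain_e hi hm
  rw [← hb', ← mul_assoc (chain r _ _), ← mul_assoc, ← hsemi.eq, mul_assoc]
  exact h.chain_e_mul_mem_normalSpan_of_mem_tower hm hmirror hi
    (mul_mem (revChain_r_mem_tower le_rfl) hb)

theorem e_mem_leftStabilizer (h : IsPathSystem n δ r e) (hm : m < n)
    (hmirror : ∀ k, k + 1 = m → ∀ c ∈ tower R r e m, c ∈ mirrorSpan R r e k) (hi : i ≤ m) :
    e i ∈ leftStabilizer (normalSpan R r e m) := by
  refine fun x hx ↦ mul_mem_of_mem_span ?_ hx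
  rintro _ (⟨j, hj, b, hb, rfl⟩ | ⟨b, hb, j, hj, rfl⟩)
  · rw [Set.mem_Iic] at hj
    beta_reduce
    obtain hij | rfl | rfl | hji : i + 1 < j ∨ j = i + 1 ∨ j = i ∨ j < i := by omega
    · rw [← mul_assoc, (commute_chain fun k hjk hkm ↦ h.commute_e_r (by omega) (by omega)).eq,
        mul_assoc]
      exact chain_mul_mem_normalSpan hj (mul_mem (e_mem_tower (by omega)) hb)
    · exact h.e_mul_chain_mul_mem_normalSpan hm hmirror hi hb
    · have her : e j * r j = e j := h.e_mul_r ⟨j, by omega⟩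
      rw [chain_eq_mul_chain r (by omega), mul_assoc, ← mul_assoc, her]
      exact h.e_mul_chain_mul_mem_normalSpan hm hmirror hi hb
    · obtain ⟨i, rfl⟩ := Nat.exists_eq_add_one_of_ne_zero (Nat.ne_zero_of_lt hji)
      rw [← mul_assoc, ← (h.semiconjBy_chain_e (by omega) (by omega) (by omega)).eq, mul_assoc]
      exact chain_mul_mem_normalSpan hj (mul_mem (e_mem_tower (by omega)) hb)
  · exact h.mul_mem_normalSpan_of_cup hm hmirror (.inr ⟨i, hi, rfl⟩) hb hj

end IsPathSystem

end Decomposition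

section SpanningSet

universe u

variable {n : ℕ} {R : Type*} [CommRing R] {δ : R}

theorem IsPathSystem.tower_succ_le_normalSpan {A : Type u} [Ring A] [Algebra R A] {r e : ℕ → A}
    (h : IsPathSystem n δ r e) {m : ℕ} (hm : m < n) :
    Subalgebra.toSubmodule (tower R r e (m + 1)) ≤ normalSpan R r e m := by
  induction m using Nat.strong_induction_on generalizing A with
  | _ m ih =>
    have hmirror (k) (hkm : k + 1 = m) (c) (hc : c ∈ tower R r e m) :
        c ∈ mirrorSpan R r e k := by
      subst hkm
      exact mem_mirrorSpan_of_op_mem_normalSpan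
        (ih k k.lt_succ_self h.op (by omega) (op_mem_tower_op hc))
    have hle : tower R r e (m + 1) ≤ leftStabilizer (normalSpan R r e m) :=
      tower_le (fun i hi ↦ h.r_mem_leftStabilizer hm hmirror (Nat.lt_succ_iff.1 hi))
        fun i hi ↦ h.e_mem_leftStabilizer hm hmirror (Nat.lt_succ_iff.1 hi)
    intro x hx
    simpa using hle hx 1 (mem_normalSpan_of_mem_tower (one_mem _))

open scoped Pointwise in
theorem IsPathSystem.exists_finset_tower_le_span {A : Type*} [Ring A] [Algebra R A] {r e : ℕ → A}
    (h : IsPathSystem n δ r e) {m : ℕ} (hm : m ≤ n) :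
    ∃ s : Finset A, s.card ≤ (2 * m + 1).doubleFactorial ∧
      Subalgebra.toSubmodule (tower R r e m) ≤ Submodule.span R s := by
  classical
  induction m with
  | zero => exact ⟨{1}, by simp, by simp [tower_zero, Algebra.toSubmodule_bot]⟩
  | succ m ih =>
    obtain ⟨s, hcard, hspan⟩ := ih (by omega)
    let P := (Finset.Iic (m + 1)).image fun j ↦ chain r j (m + 1)
    let Q := (Finset.Iic m).image fun j ↦ e m * revChain r j m
    have hP : P.card ≤ m + 2 := Finset.card_image_le.trans (by simp)
    have hQ : Q.card ≤ m + 1 := Finset.card_image_le.trans (by simp)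
    refine ⟨P * s ∪ s * Q, ?_, (h.tower_succ_le_normalSpan hm).trans (Submodule.span_le.2 ?_)⟩
    · calc (P * s ∪ s * Q).card
        _ ≤ P.card * s.card + s.card * Q.card :=
          (Finset.card_union_le _ _).trans (add_le_add Finset.card_mul_le Finset.card_mul_le)
        _ ≤ (m + 2) * s.card + s.card * (m + 1) := by gcongr
        _ = (2 * m + 3) * s.card := by ring
        _ ≤ (2 * m + 3) * (2 * m + 1).doubleFactorial := by gcongr
        _ = (2 * (m + 1) + 1).doubleFactorial := (Nat.doubleFactorial_add_two _).symm
    · rw [Finset.coe_union, Finset.coe_mul, Finset.coe_mul, Submodule.span_union,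
        ← Submodule.span_mul_span, ← Submodule.span_mul_span]
      rintro _ (⟨j, hj, b, hb, rfl⟩ | ⟨b, hb, j, hj, rfl⟩)
      · exact Submodule.mem_sup_left (Submodule.mul_mem_mul
          (Submodule.subset_span (by simpa [P] using ⟨j, hj, rfl⟩)) (hspan hb))
      · exact Submodule.mem_sup_right (Submodule.mul_mem_mul (hspan hb)
          (Submodule.subset_span (by simpa [Q] using ⟨j, hj, rfl⟩)))

end SpanningSet

/-- Perfect matchings of `X`, encoded as the fixed point free involutions of `X`: the diagrams of
the Brauer algebra are the perfect matchings of two rows of points. -/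
def PerfectMatching (X : Type*) :=
  {σ : Equiv.Perm X // Function.Involutive σ ∧ ∀ x, σ x ≠ x}

namespace PerfectMatching

section Join

variable {X : Type*}

instance : FunLike (PerfectMatching X) X X where
  coe σ := σ.1
  coe_injective _ _ h := Subtype.ext (DFunLike.coe_injective h)

theorem apply_apply (σ : PerfectMatching X) (x : X) : σ (σ x) = x := σ.2.1 x

theorem apply_ne (σ : PerfectMatching X) (x : X) : σ x ≠ x := σ.2.2 x

instance : MulAction (Equiv.Perm X) (PerfectMatching X) where
  smul p σ := ⟨p * σ.1 * p⁻¹, fun x ↦ by simp [σ.2.1 _], fun x ↦ by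
    rw [Equiv.Perm.mul_apply, Equiv.Perm.mul_apply, Ne, ← Equiv.Perm.eq_inv_iff_eq]
    exact σ.2.2 _⟩
  one_smul σ := Subtype.ext (by change 1 * σ.1 * 1⁻¹ = σ.1; simp)
  mul_smul p q σ := Subtype.ext (by
    change p * q * σ.1 * (p * q)⁻¹ = p * (q * σ.1 * q⁻¹) * p⁻¹
    group)

theorem smul_apply (p : Equiv.Perm X) (σ : PerfectMatching X) (x : X) :
    (p • σ) x = p (σ (p⁻¹ x)) := rfl

theorem smul_apply_apply (p : Equiv.Perm X) (σ : PerfectMatching X) (x : X) :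
    (p • σ) (p x) = p (σ x) := by simp [smul_apply]

instance [Finite X] : Finite (PerfectMatching X) := inferInstanceAs (Finite (Subtype _))

variable [DecidableEq X] {a b c d : X}

/-- The matching obtained from `σ` by joining `a` to `b` and the former partners of `a` and `b`
to each other. -/
def join (a b : X) (σ : PerfectMatching X) : PerfectMatching X := Equiv.swap b (σ a) • σ

theorem join_apply (hab : a ≠ b) (σ : PerfectMatching X) (x : X) :
    join a b σ x = if x = a then b else if x = b then a else if x = σ a then σ b
      else if x = σ b then σ a else σ x := by
  rw [join, smul_apply, Equiv.swap_inv, Equiv.swap_apply_def, Equiv.swap_apply_def]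
  grind [apply_apply, apply_ne]

theorem join_apply_left (hab : a ≠ b) (σ : PerfectMatching X) : join a b σ a = b := by
  rw [join_apply hab, if_pos rfl]

theorem join_of_apply_eq {σ : PerfectMatching X} (h : σ a = b) : join a b σ = σ := by
  rw [join, h, Equiv.swap_self]
  exact one_smul _ σ

theorem join_comm (hab : a ≠ b) (σ : PerfectMatching X) : join a b σ = join b a σ :=
  DFunLike.ext _ _ fun x ↦ by
    rw [join_apply hab, join_apply hab.symm]
    grind [apply_apply]

theorem smul_join (p : Equiv.Perm X) (a b : X) (σ : PerfectMatching X) :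
    p • join a b σ = join (p a) (p b) (p • σ) := by
  rw [join, join, smul_apply_apply, Equiv.swap_apply_apply, smul_smul, smul_smul]
  simp

theorem swap_smul_join (hab : a ≠ b) (σ : PerfectMatching X) :
    Equiv.swap a b • join a b σ = join a b σ :=
  DFunLike.ext _ _ fun x ↦ by
    simp only [smul_apply, Equiv.swap_inv, join_apply hab, Equiv.swap_apply_def]
    grind [apply_apply, apply_ne]

theorem join_join_comm (hab : a ≠ b) (hcd : c ≠ d) (hac : a ≠ c) (had : a ≠ d) (hbc : b ≠ c)
    (hbd : b ≠ d) (σ : PerfectMatching X) : join a b (join c d σ) = join c d (join a b σ) :=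
  DFunLike.ext _ _ fun x ↦ by
    simp only [join_apply hab, join_apply hcd]
    grind (splits := 40) [apply_apply, apply_ne]

theorem swap_smul_swap_smul_of_apply_eq (hab : a ≠ b) (hac : a ≠ c) {σ : PerfectMatching X}
    (h : σ b = c) : Equiv.swap b c • Equiv.swap a b • σ = join a b σ :=
  DFunLike.ext _ _ fun x ↦ by
    simp only [join_apply hab, smul_apply, Equiv.swap_inv, Equiv.swap_apply_def]
    grind [apply_apply, apply_ne]

theorem join_join_of_apply_eq {σ : PerfectMatching X} (h : σ a = b) (hac : a ≠ c) (hbc : b ≠ c) :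
    join a b (join a c σ) = σ :=
  DFunLike.ext _ _ fun x ↦ by
    rw [join_apply (h ▸ (σ.apply_ne a).symm)]
    simp only [join_apply hac]
    grind [apply_apply, apply_ne]

end Join

section Operators

variable {X : Type*} {R : Type*} [CommRing R]

variable (X R) in
/-- The linear action of the permutations of `X` on the free module on the matchings of `X`. -/
noncomputable def permOp : Equiv.Perm X →* Module.End R (PerfectMatching X →₀ R) where
  toFun p := Finsupp.lmapDomain R R (p • ·)
  map_one' := Finsupp.lhom_ext fun σ c ↦ by simp
  map_mul' p q := Finsupp.lhom_ext fun σ c ↦ by simp [mul_smul]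

@[simp]
theorem permOp_single (p : Equiv.Perm X) (σ : PerfectMatching X) (c : R) :
    permOp X R p (Finsupp.single σ c) = Finsupp.single (p • σ) c := by
  simp [permOp]

variable [DecidableEq X] (δ : R) {a b c d : X}

/-- The factor contributed by the closed loop which arises on joining `a` to `b` when these
points are matched already. -/
def loopWeight (a b : X) (σ : PerfectMatching X) : R := if σ a = b then δ else 1

/-- The operator joining `a` to `b`, a closed loop being replaced by `δ`. -/
noncomputable def joinOp (a b : X) : Module.End R (PerfectMatching X →₀ R) :=
  Finsupp.linearCombination R fun σ ↦ Finsupp.single (join a b σ) (loopWeight δ a b σ)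

@[simp]
theorem joinOp_single (a b : X) (σ : PerfectMatching X) (c : R) :
    joinOp δ a b (Finsupp.single σ c) = Finsupp.single (join a b σ) (c * loopWeight δ a b σ) := by
  simp [joinOp]

theorem loopWeight_comm (a b : X) (σ : PerfectMatching X) :
    loopWeight δ a b σ = loopWeight δ b a σ := by
  simp only [loopWeight]
  grind [apply_apply]

theorem loopWeight_smul (p : Equiv.Perm X) (a b : X) (σ : PerfectMatching X) :
    loopWeight δ (p a) (p b) (p • σ) = loopWeight δ a b σ := by
  simp [loopWeight, smul_apply_apply]

theorem loopWeight_mul_loopWeight_join (hab : a ≠ b) (hcd : c ≠ d) (hac : a ≠ c) (had : a ≠ d)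
    (hbc : b ≠ c) (hbd : b ≠ d) (σ : PerfectMatching X) :
    loopWeight δ c d σ * loopWeight δ a b (join c d σ) =
      loopWeight δ a b σ * loopWeight δ c d (join a b σ) := by
  simp only [loopWeight, join_apply hab, join_apply hcd]
  grind [apply_apply, apply_ne]

theorem joinOp_comm (hab : a ≠ b) : joinOp δ a b = joinOp δ b a :=
  Finsupp.lhom_ext fun σ c ↦ by
    rw [joinOp_single, joinOp_single, join_comm hab, loopWeight_comm]

theorem semiconjBy_permOp_joinOp (p : Equiv.Perm X) (a b : X) :
    SemiconjBy (permOp X R p) (joinOp δ a b) (joinOp δ (p a) (p b)) :=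
  Finsupp.lhom_ext fun σ c ↦ by
    simp [smul_join, loopWeight_smul, -Finsupp.single_mul]

theorem joinOp_apply_apply (p : Equiv.Perm X) (a b : X) :
    joinOp δ (p a) (p b) = permOp X R p * joinOp δ a b * permOp X R p⁻¹ := by
  rw [(semiconjBy_permOp_joinOp δ p a b).eq, mul_assoc, ← map_mul, mul_inv_cancel, map_one, mul_one]

theorem permOp_swap_mul_joinOp (hab : a ≠ b) :
    permOp X R (Equiv.swap a b) * joinOp δ a b = joinOp δ a b :=
  Finsupp.lhom_ext fun σ c ↦ by
    simp [swap_smul_join hab, -Finsupp.single_mul]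

theorem joinOp_mul_permOp_swap (hab : a ≠ b) :
    joinOp δ a b * permOp X R (Equiv.swap a b) = joinOp δ a b := by
  have hsemi := semiconjBy_permOp_joinOp δ (Equiv.swap a b) a b
  rw [Equiv.swap_apply_left, Equiv.swap_apply_right, ← joinOp_comm δ hab] at hsemi
  rw [← hsemi.eq, permOp_swap_mul_joinOp δ hab]

theorem joinOp_mul_joinOp_self (hab : a ≠ b) : joinOp δ a b * joinOp δ a b = δ • joinOp δ a b :=
  Finsupp.lhom_ext fun σ c ↦ by
    have hjoin := join_apply_left hab σ
    have hloop : loopWeight δ a b (join a b σ) = δ := if_pos hjoin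
    simp [join_of_apply_eq hjoin, hloop, mul_comm δ, -Finsupp.single_mul]

theorem commute_joinOp_joinOp (hab : a ≠ b) (hcd : c ≠ d) (hac : a ≠ c) (had : a ≠ d)
    (hbc : b ≠ c) (hbd : b ≠ d) : Commute (joinOp δ a b) (joinOp δ c d) :=
  Finsupp.lhom_ext fun σ x ↦ by
    simp [-Finsupp.single_mul, mul_assoc, join_join_comm hab hcd hac had hbc hbd,
      loopWeight_mul_loopWeight_join δ hab hcd hac had hbc hbd]

variable (R) in
theorem commute_permOp_swap (hac : a ≠ c) (had : a ≠ d) (hbc : b ≠ c) (hbd : b ≠ d) :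
    Commute (permOp X R (Equiv.swap a b)) (permOp X R (Equiv.swap c d)) := by
  have hdisj : (Equiv.swap a b).Disjoint (Equiv.swap c d) := fun x ↦ by
    simp only [Equiv.swap_apply_def]
    grind
  exact hdisj.commute.map (permOp X R)

theorem commute_joinOp_permOp_swap (hac : a ≠ c) (had : a ≠ d) (hbc : b ≠ c) (hbd : b ≠ d) :
    Commute (joinOp δ a b) (permOp X R (Equiv.swap c d)) := by
  have hsemi := semiconjBy_permOp_joinOp δ (Equiv.swap c d) a b
  rw [Equiv.swap_apply_of_ne_of_ne hac had, Equiv.swap_apply_of_ne_of_ne hbc hbd] at hsemi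
  exact Commute.symm hsemi

variable (R) in
theorem permOp_swap_braid (hab : a ≠ b) (hac : a ≠ c) (hbc : b ≠ c) :
    permOp X R (Equiv.swap a b) * permOp X R (Equiv.swap b c) * permOp X R (Equiv.swap a b) =
      permOp X R (Equiv.swap b c) * permOp X R (Equiv.swap a b) *
        permOp X R (Equiv.swap b c) := by
  simp only [← map_mul]
  rw [Equiv.swap_mul_swap_mul_swap hab hac, Equiv.swap_comm a b, Equiv.swap_comm b c,
    Equiv.swap_mul_swap_mul_swap hbc.symm hac.symm, Equiv.swap_comm]

theorem permOp_swap_mul_permOp_swap_mul_joinOp (hab : a ≠ b) (hac : a ≠ c) (hbc : b ≠ c) :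
    permOp X R (Equiv.swap b c) * permOp X R (Equiv.swap a b) * joinOp δ b c =
      joinOp δ a b * joinOp δ b c :=
  Finsupp.lhom_ext fun σ x ↦ by
    have hjoin := join_apply_left hbc σ
    have hloop : loopWeight δ a b (join b c σ) = 1 :=
      if_neg fun h ↦ hac (by rw [← apply_apply (join b c σ) a, h, hjoin])
    simp [swap_smul_swap_smul_of_apply_eq hab hac hjoin, hloop, -Finsupp.single_mul]

theorem permOp_swap_mul_joinOp_mul_permOp_swap (hab : a ≠ b) (hac : a ≠ c) (hbc : b ≠ c) :
    permOp X R (Equiv.swap a b) * joinOp δ b c * permOp X R (Equiv.swap a b) =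
      permOp X R (Equiv.swap b c) * joinOp δ a b * permOp X R (Equiv.swap b c) := by
  rw [(semiconjBy_permOp_joinOp δ _ b c).eq, (semiconjBy_permOp_joinOp δ _ a b).eq, mul_assoc,
    mul_assoc, ← map_mul, ← map_mul, Equiv.swap_mul_self, Equiv.swap_mul_self,
    Equiv.swap_apply_right, Equiv.swap_apply_of_ne_of_ne hac.symm hbc.symm,
    Equiv.swap_apply_left, Equiv.swap_apply_of_ne_of_ne hab hac]

end Operators

section PathSystem

variable {X R : Type*} {n : ℕ} {pts : Fin (n + 1) → X}

theorem endpoints_ne_of_not_adj (hpts : Function.Injective pts) {i j : Fin n} (hne : i ≠ j)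
    (hij : ¬ (typeA n).Adj i j) :
    pts i.castSucc ≠ pts j.castSucc ∧ pts i.castSucc ≠ pts j.succ ∧
      pts i.succ ≠ pts j.castSucc ∧ pts i.succ ≠ pts j.succ := by
  rw [typeA_adj] at hij
  simp only [ne_eq, hpts.eq_iff, Fin.ext_iff, Fin.val_castSucc, Fin.val_succ] at hne ⊢
  omega

variable [DecidableEq X] [CommRing R] (δ : R)

theorem exists_swap_eq_joinOp_eq_of_adj (hpts : Function.Injective pts) {i j : Fin n}
    (hij : (typeA n).Adj i j) : ∃ a b c : X, a ≠ b ∧ a ≠ c ∧ b ≠ c ∧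
      (Equiv.swap (pts i.castSucc) (pts i.succ) = Equiv.swap a b ∧
        joinOp δ (pts i.castSucc) (pts i.succ) = joinOp δ a b) ∧
      Equiv.swap (pts j.castSucc) (pts j.succ) = Equiv.swap b c ∧
        joinOp δ (pts j.castSucc) (pts j.succ) = joinOp δ b c := by
  rcases typeA_adj.1 hij with hij | hij
  · have hb : i.succ = j.castSucc := Fin.ext hij
    refine ⟨pts i.castSucc, pts i.succ, pts j.succ, ?_, ?_, ?_, ⟨rfl, rfl⟩, by rw [hb], by rw [hb]⟩
    all_goals simp only [ne_eq, hpts.eq_iff, Fin.ext_iff, Fin.val_castSucc, Fin.val_succ]; omega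
  · have hb : j.succ = i.castSucc := Fin.ext hij
    have hne : ∀ l : Fin n, pts l.castSucc ≠ pts l.succ :=
      fun l ↦ hpts.ne l.castSucc_lt_succ.ne
    refine ⟨pts i.succ, pts i.castSucc, pts j.castSucc, (hne i).symm, ?_, ?_,
      ⟨Equiv.swap_comm _ _, joinOp_comm δ (hne i)⟩, ?_, ?_⟩
    · simp only [ne_eq, hpts.eq_iff, Fin.ext_iff, Fin.val_castSucc, Fin.val_succ]; omega
    · simp only [ne_eq, hpts.eq_iff, Fin.ext_iff, Fin.val_castSucc]; omega
    · rw [← hb, Equiv.swap_comm]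
    · rw [← hb, joinOp_comm δ (hne j)]

theorem isBrauerSystem_permOp_joinOp (hpts : Function.Injective pts) :
    IsBrauerSystem (typeA n) δ
      (fun i ↦ permOp X R (Equiv.swap (pts i.castSucc) (pts i.succ)))
      (fun i ↦ joinOp δ (pts i.castSucc) (pts i.succ)) := by
  have hpair (i : Fin n) : pts i.castSucc ≠ pts i.succ := hpts.ne i.castSucc_lt_succ.ne
  constructor
  case r_mul_r => exact fun i ↦ by rw [← map_mul, Equiv.swap_mul_self, map_one]
  case r_mul_e => exact fun i ↦ permOp_swap_mul_joinOp δ (hpair i)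
  case e_mul_r => exact fun i ↦ joinOp_mul_permOp_swap δ (hpair i)
  case e_mul_e => exact fun i ↦ joinOp_mul_joinOp_self δ (hpair i)
  case commute_r_r =>
    intro i j hne hij
    obtain ⟨hac, had, hbc, hbd⟩ := endpoints_ne_of_not_adj hpts hne hij
    exact commute_permOp_swap R hac had hbc hbd
  case commute_e_r =>
    intro i j hne hij
    obtain ⟨hac, had, hbc, hbd⟩ := endpoints_ne_of_not_adj hpts hne hij
    exact commute_joinOp_permOp_swap δ hac had hbc hbd
  case commute_e_e =>
    intro i j hne hij
    obtain ⟨hac, had, hbc, hbd⟩ := endpoints_ne_of_not_adj hpts hne hij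
    exact commute_joinOp_joinOp δ (hpair i) (hpair j) hac had hbc hbd
  case braid =>
    intro i j hij
    obtain ⟨a, b, c, hab, hac, hbc, ⟨hi, -⟩, hj, -⟩ := exists_swap_eq_joinOp_eq_of_adj δ hpts hij
    simp only [hi, hj, permOp_swap_braid R hab hac hbc]
  case r_mul_r_mul_e =>
    intro i j hij
    obtain ⟨a, b, c, hab, hac, hbc, ⟨hi, hi'⟩, hj, hj'⟩ :=
      exists_swap_eq_joinOp_eq_of_adj δ hpts hij
    simp only [hi, hi', hj, hj', permOp_swap_mul_permOp_swap_mul_joinOp δ hab hac hbc]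
  case r_mul_e_mul_r =>
    intro i j hij
    obtain ⟨a, b, c, hab, hac, hbc, ⟨hi, hi'⟩, hj, hj'⟩ :=
      exists_swap_eq_joinOp_eq_of_adj δ hpts hij
    simp only [hi, hi', hj, hj', permOp_swap_mul_joinOp_mul_permOp_swap δ hab hac hbc]

end PathSystem

section TwoRows

variable (S : Type*) {R : Type*} [CommRing R]

/-- The identity diagram on two rows of points, which matches every point of the top row `.inl`
with the corresponding point of the bottom row `.inr`. -/
def identity : PerfectMatching (S ⊕ S) :=
  ⟨Equiv.sumComm S S, Sum.swap_swap, by rintro (x | x) <;> simp⟩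

/-- The permutations of the two rows of points which only move the top row. -/
def topRowHom : Equiv.Perm S →* Equiv.Perm (S ⊕ S) :=
  (Equiv.Perm.sumCongrHom S S).comp (MonoidHom.inl _ _)

theorem topRowHom_swap [DecidableEq S] (a b : S) :
    topRowHom S (Equiv.swap a b) = Equiv.swap (.inl a) (.inl b) :=
  Equiv.Perm.sumCongr_swap_one a b

variable {S} [Finite S] {σ : PerfectMatching (S ⊕ S)}

theorem exists_smul_identity_eq (hσ : ∀ x, (σ (.inr x)).isLeft) :
    ∃ p : Equiv.Perm S, topRowHom S p • identity S = σ := by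
  choose f hf using fun x ↦ Sum.isLeft_iff.1 (hσ x)
  have hinj : Function.Injective f := fun x y hxy ↦
    Sum.inr_injective (σ.1.injective ((hf x).trans ((congrArg Sum.inl hxy).trans (hf y).symm)))
  let p := Equiv.ofBijective f (Finite.injective_iff_bijective.1 hinj)
  have hinr (y : S) : (topRowHom S p • identity S) (.inr y) = .inl (p y) := rfl
  have hσinr (y : S) : σ (.inr y) = .inl (p y) := hf y
  refine ⟨p, DFunLike.ext _ _ ?_⟩
  rintro (z | y)
  · obtain ⟨y, rfl⟩ := p.surjective z
    rw [← hinr, apply_apply, hinr, ← hσinr, apply_apply]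
  · rw [hinr, hσinr]

theorem exists_apply_inl_eq_inl {x y : S} (hxy : σ (.inr x) = .inr y) :
    ∃ a b, σ (.inl a) = .inl b := by
  by_contra! hno
  have hright (a : S) : (σ (.inl a)).isRight := by
    rcases ha : σ (.inl a) with b | z
    exacts [absurd ha (hno a b), rfl]
  choose f hf using fun a ↦ Sum.isRight_iff.1 (hright a)
  have hinj : Function.Injective f := fun a b hab ↦
    Sum.inl_injective (σ.1.injective ((hf a).trans ((congrArg Sum.inr hab).trans (hf b).symm)))
  obtain ⟨a, rfl⟩ := Finite.surjective_of_injective hinj x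
  rw [← hf a, apply_apply] at hxy
  exact Sum.inl_ne_inr hxy

variable [DecidableEq S] (δ : R)

theorem ncard_bottomPaired_join_lt {a b x y : S} (hab : σ (.inl a) = .inl b)
    (hxy : σ (.inr x) = .inr y) :
    {z | (join (.inl a) (.inr x) σ (.inr z)).isRight}.ncard <
      {z | (σ (.inr z)).isRight}.ncard := by
  have hjoin := join_apply (a := Sum.inl a) (b := Sum.inr x) Sum.inl_ne_inr σ
  refine Set.ncard_lt_ncard ⟨fun z ↦ ?_, fun hsub ↦ ?_⟩
  · simp only [Set.mem_ofPred_eq, hjoin, hab, hxy]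
    split_ifs <;> simp_all
  · have hx : x ∈ {z | (σ (.inr z)).isRight} := by simp [hxy]
    simpa [hjoin] using hsub hx

/-- If the bottom row contains a pair then, by counting, so does the top row; reconnecting the two
pairs vertically lowers the number of bottom pairs, and joining the top points again recovers the
matching. -/
theorem single_one_mem_of_single_identity_mem {U : Submodule R (PerfectMatching (S ⊕ S) →₀ R)}
    (hperm : ∀ p, ∀ u ∈ U, permOp _ R (topRowHom S p) u ∈ U)
    (hjoin : ∀ a b, a ≠ b → ∀ u ∈ U, joinOp δ (.inl a) (.inl b) u ∈ U)
    (hone : Finsupp.single (identity S) 1 ∈ U) (σ : PerfectMatching (S ⊕ S)) :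
    Finsupp.single σ 1 ∈ U := by
  induction hN : {z | (σ (.inr z)).isRight}.ncard using Nat.strong_induction_on generalizing σ with
  | _ N ih =>
  subst hN
  by_cases hσ : ∀ x, (σ (.inr x)).isLeft
  · obtain ⟨p, hp⟩ := exists_smul_identity_eq hσ
    simpa only [permOp_single, hp] using hperm p _ hone
  · obtain ⟨x, hx⟩ := not_forall.1 hσ
    obtain ⟨y, hxy⟩ := Sum.isRight_iff.1 (Sum.not_isLeft.1 hx)
    obtain ⟨a, b, hab⟩ := exists_apply_inl_eq_inl hxy
    have hne : a ≠ b := by rintro rfl; exact σ.apply_ne _ hab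
    have hmem := hjoin a b hne _ (ih _ (ncard_bottomPaired_join_lt hab hxy) _ rfl)
    have hloop : loopWeight δ (.inl a) (.inl b) (join (.inl a) (.inr x) σ) = 1 :=
      if_neg (by simp [join_apply_left])
    rwa [joinOp_single, hloop, mul_one,
      join_join_of_apply_eq hab Sum.inl_ne_inr Sum.inl_ne_inr] at hmem

theorem eq_top_of_single_identity_mem {U : Submodule R (PerfectMatching (S ⊕ S) →₀ R)}
    (hperm : ∀ p, ∀ u ∈ U, permOp _ R (topRowHom S p) u ∈ U)
    (hjoin : ∀ a b, a ≠ b → ∀ u ∈ U, joinOp δ (.inl a) (.inl b) u ∈ U)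
    (hone : Finsupp.single (identity S) 1 ∈ U) : U = ⊤ := by
  rw [eq_top_iff, ← Finsupp.basisSingleOne.span_eq, Submodule.span_le]
  rintro _ ⟨σ, rfl⟩
  exact Finsupp.coe_basisSingleOne (R := R) ▸
    single_one_mem_of_single_identity_mem δ hperm hjoin hone σ

end TwoRows

section TopRowOperators

variable {R : Type*} [CommRing R] {δ : R} {n : ℕ}
  {B : Subalgebra R (Module.End R (PerfectMatching (Fin (n + 1) ⊕ Fin (n + 1)) →₀ R))}

theorem permOp_topRowHom_mem
    (hB : ∀ i : Fin n, permOp _ R (Equiv.swap (.inl i.castSucc) (.inl i.succ)) ∈ B)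
    (p : Equiv.Perm (Fin (n + 1))) : permOp _ R (topRowHom _ p) ∈ B := by
  have hle : Submonoid.closure (Set.range fun i : Fin n ↦ Equiv.swap i.castSucc i.succ) ≤
      B.toSubmonoid.comap ((permOp _ R).comp (topRowHom _)) := by
    rw [Submonoid.closure_le]
    rintro _ ⟨i, rfl⟩
    simpa [topRowHom_swap] using hB i
  rw [Equiv.Perm.mclosure_swap_castSucc_succ] at hle
  exact hle (Submonoid.mem_top p)

theorem joinOp_inl_inl_mem
    (hB : ∀ i : Fin n, permOp _ R (Equiv.swap (.inl i.castSucc) (.inl i.succ)) ∈ B)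
    (hB' : ∀ i : Fin n, joinOp δ (.inl i.castSucc) (.inl i.succ) ∈ B) {a b : Fin (n + 1)}
    (hab : a ≠ b) : joinOp δ (.inl a) (.inl b) ∈ B := by
  rcases n with _ | n
  · exact absurd (Fin.fin_one_eq_zero a ▸ (Fin.fin_one_eq_zero b).symm) hab
  obtain ⟨p, rfl, rfl⟩ := MulAction.is_two_pretransitive_iff.1
    (Equiv.Perm.isMultiplyPretransitive (Fin (n + 2)) 2) (Fin.castSucc_lt_succ (i := 0)).ne hab
  have hconj := joinOp_apply_apply δ (topRowHom _ p) (.inl (Fin.castSucc 0)) (.inl (Fin.succ 0))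
  rw [← map_inv] at hconj
  exact hconj ▸ B.mul_mem (B.mul_mem (permOp_topRowHom_mem hB p) (hB' 0))
    (permOp_topRowHom_mem hB p⁻¹)

end TopRowOperators

section Count

variable {X : Type*} [Fintype X] {m : ℕ}

theorem cycleType_eq_replicate_two_iff [DecidableEq X] (hX : Fintype.card X = 2 * m)
    (g : Equiv.Perm X) :
    g.cycleType = Multiset.replicate m 2 ↔ Function.Involutive g ∧ ∀ x, g x ≠ x := by
  have hsq : g ^ 2 = 1 ↔ Function.Involutive g := by
    simp only [Equiv.ext_iff, sq, Equiv.Perm.mul_apply, Equiv.Perm.one_apply, Function.Involutive]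
  have hsupp : g.support = Finset.univ ↔ ∀ x, g x ≠ x := by
    simp only [Finset.eq_univ_iff_forall, Equiv.Perm.mem_support]
  rw [← hsq, ← hsupp, ← Finset.card_eq_iff_eq_univ, ← Equiv.Perm.sum_cycleType, hX]
  constructor
  · intro hg
    refine ⟨?_, by rw [hg, Multiset.sum_replicate, smul_eq_mul, mul_comm]⟩
    rw [← orderOf_dvd_iff_pow_eq_one, ← Equiv.Perm.lcm_cycleType, hg]
    exact Multiset.lcm_dvd.2 fun b hb ↦ (Multiset.eq_of_mem_replicate hb).dvd
  · rintro ⟨hg, hsum⟩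
    rw [Equiv.Perm.cycleType_of_pow_prime_eq_one hg] at hsum ⊢
    rw [Multiset.sum_replicate, smul_eq_mul, mul_comm] at hsum
    rw [Nat.eq_of_mul_eq_mul_left two_pos hsum]

theorem nat_card (hX : Fintype.card X = 2 * (m + 1)) :
    Nat.card (PerfectMatching X) = (2 * m + 1).doubleFactorial := by
  classical
  have hsum : (Multiset.replicate (m + 1) 2).sum = 2 * (m + 1) := by
    rw [Multiset.sum_replicate, smul_eq_mul, mul_comm]
  have hcount := Equiv.Perm.card_of_cycleType_mul_eq (α := X) (Multiset.replicate (m + 1) 2)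
  rw [if_pos ⟨(hsum.trans hX.symm).le, fun b hb ↦ (Multiset.eq_of_mem_replicate hb).ge⟩, hX, hsum,
    Nat.sub_self, Nat.factorial_zero, one_mul, Multiset.prod_replicate,
    Multiset.toFinset_replicate, if_neg m.succ_ne_zero, Finset.prod_singleton,
    Multiset.count_replicate_self, ← Nat.doubleFactorial_two_mul,
    show 2 * (m + 1) = 2 * m + 1 + 1 by ring, Nat.factorial_eq_mul_doubleFactorial,
    mul_comm] at hcount
  rw [← Nat.eq_of_mul_eq_mul_left (Nat.doubleFactorial_pos _) hcount, ← Fintype.card_subtype,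
    ← Nat.card_eq_fintype_card]
  exact Nat.card_congr (Equiv.subtypeEquivRight fun g ↦
    (cycleType_eq_replicate_two_iff hX g).symm)

end Count

end PerfectMatching

section DiagramRepresentation

variable (n : ℕ) {R : Type*} [CommRing R] (δ : R)

/-- The action of the Brauer algebra of type `A_n` on the diagrams with two rows of `n + 1` points,
by concatenation at the top row. -/
noncomputable def diagramRep : BrauerAlgebra n (typeA n) R δ →ₐ[R]
    Module.End R (PerfectMatching (Fin (n + 1) ⊕ Fin (n + 1)) →₀ R) :=
  lift (PerfectMatching.isBrauerSystem_permOp_joinOp δ Sum.inl_injective)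

/-- The diagrammatic expansion of an element of the Brauer algebra of type `A_n`: the result of its
action on the identity diagram. -/
noncomputable def toDiagrams : BrauerAlgebra n (typeA n) R δ →ₗ[R]
    (PerfectMatching (Fin (n + 1) ⊕ Fin (n + 1)) →₀ R) :=
  LinearMap.applyₗ (Finsupp.single (PerfectMatching.identity _) 1) ∘ₗ (diagramRep n δ).toLinearMap

theorem toDiagrams_surjective : Function.Surjective (toDiagrams n δ) := by
  have hmem {T} (hT : T ∈ (diagramRep n δ).range) (u) (hu : u ∈ LinearMap.range (toDiagrams n δ)) :
      T u ∈ LinearMap.range (toDiagrams n δ) := by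
    obtain ⟨y, rfl⟩ := hT
    obtain ⟨x, rfl⟩ := hu
    exact ⟨y * x, by simp [toDiagrams]⟩
  have hperm (i : Fin n) : PerfectMatching.permOp _ R
      (Equiv.swap (.inl i.castSucc) (.inl i.succ)) ∈ (diagramRep n δ).range :=
    ⟨gen (typeA n) δ (.inl i), by simp [diagramRep]⟩
  have hjoin (i : Fin n) :
      PerfectMatching.joinOp δ (.inl i.castSucc) (.inl i.succ) ∈ (diagramRep n δ).range :=
    ⟨gen (typeA n) δ (.inr i), by simp [diagramRep]⟩
  rw [← LinearMap.range_eq_top]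
  exact PerfectMatching.eq_top_of_single_identity_mem δ
    (fun p ↦ hmem (PerfectMatching.permOp_topRowHom_mem hperm p))
    (fun a b hab ↦ hmem (PerfectMatching.joinOp_inl_inl_mem hperm hjoin hab))
    ⟨1, by simp [toDiagrams]⟩

end DiagramRepresentation

section Main

variable (n : ℕ) {R : Type*} [CommRing R] (δ : R)

theorem exists_finset_card_le_span_eq_top : ∃ s : Finset (BrauerAlgebra n (typeA n) R δ),
    s.card ≤ (2 * n + 1).doubleFactorial ∧
      Submodule.span R (s : Set (BrauerAlgebra n (typeA n) R δ)) = ⊤ := by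
  let r : ℕ → BrauerAlgebra n (typeA n) R δ :=
    Function.extend Fin.val (fun i ↦ gen (typeA n) δ (.inl i)) 0
  let e : ℕ → BrauerAlgebra n (typeA n) R δ :=
    Function.extend Fin.val (fun i ↦ gen (typeA n) δ (.inr i)) 0
  have hr (i : Fin n) : r i = gen (typeA n) δ (.inl i) := Fin.val_injective.extend_apply _ _ i
  have he (i : Fin n) : e i = gen (typeA n) δ (.inr i) := Fin.val_injective.extend_apply _ _ i
  have hsystem : IsPathSystem n δ r e := by
    simpa only [IsPathSystem, hr, he] using isBrauerSystem_gen (typeA n) δ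
  obtain ⟨s, hcard, hspan⟩ := hsystem.exists_finset_tower_le_span le_rfl
  have htower : tower R r e n = ⊤ := by
    rw [eq_top_iff, ← adjoin_range_gen (typeA n) δ, Algebra.adjoin_le_iff]
    rintro _ ⟨i | i, rfl⟩
    · exact hr i ▸ r_mem_tower i.isLt
    · exact he i ▸ e_mem_tower i.isLt
  rw [htower, Algebra.top_toSubmodule] at hspan
  exact ⟨s, hcard, top_le_iff.1 hspan⟩

theorem nat_card_perfectMatching_two_rows :
    Nat.card (PerfectMatching (Fin (n + 1) ⊕ Fin (n + 1))) = (2 * n + 1).doubleFactorial :=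
  PerfectMatching.nat_card (by rw [Fintype.card_sum, Fintype.card_fin, two_mul])

theorem toDiagrams_bijective : Function.Bijective (toDiagrams n δ) := by
  obtain ⟨s, hcard, hspan⟩ := exists_finset_card_le_span_eq_top n δ
  rw [← nat_card_perfectMatching_two_rows] at hcard
  exact bijective_of_surjective_finsupp_of_card_le hspan hcard _ (toDiagrams_surjective n δ)

/-- The diagram basis of the Brauer algebra of type `A_n`. -/
noncomputable def diagramBasis : Module.Basis (PerfectMatching (Fin (n + 1) ⊕ Fin (n + 1))) R
    (BrauerAlgebra n (typeA n) R δ) :=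
  .ofRepr (LinearEquiv.ofBijective (toDiagrams n δ) (toDiagrams_bijective n δ))

end Main

end BrauerAlgebra

theorem brauerAlgebra_typeA_laurent_free_rank_general {R : Type*} [CommRing R] [Nontrivial R]
    (δ : R) (n : ℕ) :
    Module.Free R (BrauerAlgebra n (typeA n) R δ) ∧
    Module.rank R (BrauerAlgebra n (typeA n) R δ) =
      (Nat.doubleFactorial (2 * n + 1) : Cardinal) := by
  have basis := BrauerAlgebra.diagramBasis n δ
  refine ⟨.of_basis basis, ?_⟩
  have hrank := basis.mk_eq_rank
  rwa [Cardinal.lift_id', ← Nat.cast_card, BrauerAlgebra.nat_card_perfectMatching_two_rows,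
    Cardinal.lift_natCast, eq_comm] at hrank

/-- For any field `k` and `n ≥ 1`, the Brauer algebra
`Br(A_n, k[δ,δ⁻¹], δ)` over the Laurent polynomial ring `k[δ,δ⁻¹]`, with
parameter the variable `δ`, is a free `k[δ,δ⁻¹]`-module of rank
`(2n+1)!! = 1·3·5⋯(2n+1)`. -/
theorem brauerAlgebra_typeA_laurent_free_rank
    (k : Type) [Field k] (n : ℕ) (hn : 1 ≤ n) :
    Module.Free (LaurentPolynomial k)
      (BrauerAlgebra n (typeA n) (LaurentPolynomial k) (LaurentPolynomial.T 1)) ∧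
    Module.rank (LaurentPolynomial k)
      (BrauerAlgebra n (typeA n) (LaurentPolynomial k) (LaurentPolynomial.T 1)) =
      (Nat.doubleFactorial (2 * n + 1) : Cardinal) :=
  brauerAlgebra_typeA_laurent_free_rank_general _ n
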